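/- Let f be the Lomelí map with parameters a = 44/100, b = 21/100, c = 35/100, α = −1/4, τ = −3/10. Then f has two distinct fixed points p_1 ≠ p_2, each of the form (x,x,x) with x² + τx + α = 0, such that: the complex Jacobian matrix Df(p_1) has an eigenvalue λ_1 with Re λ_1 ∈ [−0.71570025199987, −0.71570025199985] and Im λ_1 ∈ [−0.93025058966104, −0.93025058966103], and Df(p_2) has an eigenvalue λ_2 with Re λ_2 ∈ [−0.47875667823481, −0.47875667823480] and Im λ_2 ∈ [−0.70015090953401, −0.70015090953400]. In particular |λ_1| > 1 and |λ_2| < 1, so p_1 has a complex conjugate pair of unstable eigenvalues and p_2 a complex conjugate pair of stable eigenvalues. -/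

import Mathlib

open Matrix

/-- The Jacobian matrix of `f : ℝ³ → ℝ³` at a point. -/
noncomputable def jacobian (f : (Fin 3 → ℝ) → (Fin 3 → ℝ)) (z : Fin 3 → ℝ) :
    Matrix (Fin 3) (Fin 3) ℝ :=
  Matrix.of fun i j => fderiv ℝ f z (Pi.single j 1) i


lemma lomeli_fderiv (f : (Fin 3 → ℝ) → (Fin 3 → ℝ))
    (hf : ∀ v, f v =
      ![v 2 + (-1 / 4 : ℝ) + (-3 / 10 : ℝ) * v 0 + (44 / 100 : ℝ) * (v 0) ^ 2 +
          (21 / 100 : ℝ) * v 0 * v 1 + (35 / 100 : ℝ) * (v 1) ^ 2, v 0, v 1]) (x : ℝ) :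
    jacobian f ![x, x, x] =
      !![-3 / 10 + 109 / 100 * x, 91 / 100 * x, 1; 1, 0, 0; 0, 1, 0] := by
  have hp (i : Fin 3) (z : Fin 3 → ℝ) :
      HasFDerivAt (fun v : Fin 3 → ℝ => v i) (ContinuousLinearMap.proj (R := ℝ) i) z :=
    hasFDerivAt_apply i z
  set z : Fin 3 → ℝ := ![x, x, x] with hz
  have h0 := (((((hp 2 z).add_const (-1 / 4 : ℝ)).add ((hp 0 z).const_mul (-3 / 10 : ℝ))).add
    (((hp 0 z).pow 2).const_mul (44 / 100 : ℝ))).add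
    (((hp 0 z).const_mul (21 / 100 : ℝ)).mul (hp 1 z))).add
    (((hp 1 z).pow 2).const_mul (35 / 100 : ℝ))
  obtain ⟨L, hL⟩ : ∃ L, L = ((ContinuousLinearMap.proj 2 + (-3 / 10 : ℝ) • ContinuousLinearMap.proj 0 +
          (44 / 100 : ℝ) • (2 • z 0 ^ (2 - 1)) • ContinuousLinearMap.proj 0 +
        ((21 / 100 * z 0) • ContinuousLinearMap.proj 1 +
          z 1 • (21 / 100 : ℝ) • ContinuousLinearMap.proj 0) +
      (35 / 100 : ℝ) • (2 • z 1 ^ (2 - 1)) • ContinuousLinearMap.proj 1 :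
        (Fin 3 → ℝ) →L[ℝ] ℝ)) := ⟨_, rfl⟩
  rw [← hL] at h0
  have hF : HasFDerivAt f (ContinuousLinearMap.pi ![L,
      ContinuousLinearMap.proj (R := ℝ) (φ := fun _ : Fin 3 => ℝ) 0,
      ContinuousLinearMap.proj (R := ℝ) (φ := fun _ : Fin 3 => ℝ) 1]) z := by
    rw [hasFDerivAt_pi']
    intro i
    fin_cases i
    · refine (h0.congr_of_eventuallyEq (Filter.Eventually.of_forall ?_))
      intro v
      simp [hf]
    · refine ((hp 0 z).congr_of_eventuallyEq (Filter.Eventually.of_forall ?_))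
      intro v
      simp [hf]
    · refine ((hp 1 z).congr_of_eventuallyEq (Filter.Eventually.of_forall ?_))
      intro v
      simp [hf]
  unfold jacobian
  rw [hF.fderiv]
  ext i j
  fin_cases i <;> fin_cases j <;> simp [hL, hz] <;> ring

lemma lomeli_root (A B r s t : ℝ) (hs : 2 * s = A - r) (hst : r * (s ^ 2 + t ^ 2) = 1)
    (hr : r ^ 3 - A * r ^ 2 - B * r - 1 = 0) :
    ((!![A, B, 1; 1, 0, 0; 0, 1, 0] : Matrix (Fin 3) (Fin 3) ℝ).map
      Complex.ofReal).charpoly.IsRoot (⟨s, t⟩ : ℂ) := by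
  have hr0 : r ≠ 0 := by rintro rfl; simp at hst
  have hA : A = 2 * s + r := by linarith
  have hB : B = -2 * s * r - (s ^ 2 + t ^ 2) := by
    apply mul_left_cancel₀ hr0
    subst hA
    linear_combination -hr + hst
  have key : (⟨s, t⟩ : ℂ) ^ 2 - 2 * s * ⟨s, t⟩ + (s ^ 2 + t ^ 2) = 0 := by
    apply Complex.ext <;> simp [pow_two] <;> ring
  have hst' : (r : ℂ) * (s ^ 2 + t ^ 2) = 1 := by exact_mod_cast hst
  rw [Polynomial.IsRoot, Matrix.eval_charpoly, Matrix.det_fin_three]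
  simp [hB, hA]
  linear_combination ((⟨s, t⟩ : ℂ) - r) * key + hst'

lemma lomeli_fix (f : (Fin 3 → ℝ) → (Fin 3 → ℝ))
    (hf : ∀ v, f v =
      ![v 2 + (-1 / 4 : ℝ) + (-3 / 10 : ℝ) * v 0 + (44 / 100 : ℝ) * (v 0) ^ 2 +
          (21 / 100 : ℝ) * v 0 * v 1 + (35 / 100 : ℝ) * (v 1) ^ 2, v 0, v 1]) (x : ℝ)
    (hx : x ^ 2 + (-3 / 10 : ℝ) * x + (-1 / 4 : ℝ) = 0) : f ![x, x, x] = ![x, x, x] := by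
  rw [hf]
  ext i
  fin_cases i
  · simp
    linear_combination hx
  · simp
  · simp

/-- From bounds on the fixed point and the real eigenvalue to bounds on the complex one. -/
lemma lomeli_enclose (x rlo rhi slo shi tlo thi : ℝ) (hr0 : 0 < rlo) (hle : rlo ≤ rhi)
    (hlo : rlo ^ 3 - (-3 / 10 + 109 / 100 * x) * rlo ^ 2 - 91 / 100 * x * rlo - 1 ≤ 0)
    (hhi : 0 ≤ rhi ^ 3 - (-3 / 10 + 109 / 100 * x) * rhi ^ 2 - 91 / 100 * x * rhi - 1)
    (hslo : 2 * slo ≤ -3 / 10 + 109 / 100 * x - rhi)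
    (hshi : -3 / 10 + 109 / 100 * x - rlo ≤ 2 * shi)
    (hs0 : shi ≤ 0) (ht0 : 0 ≤ thi) (hq : 0 ≤ tlo)
    (h1 : rhi * (slo ^ 2 + tlo ^ 2) ≤ 1) (h2 : 1 ≤ rlo * (shi ^ 2 + thi ^ 2)) :
    ∃ r s t : ℝ, 2 * s = -3 / 10 + 109 / 100 * x - r ∧ r * (s ^ 2 + t ^ 2) = 1 ∧
      r ^ 3 - (-3 / 10 + 109 / 100 * x) * r ^ 2 - 91 / 100 * x * r - 1 = 0 ∧
      slo ≤ s ∧ s ≤ shi ∧ -thi ≤ t ∧ t ≤ -tlo := by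
  have hc : ContinuousOn (fun r : ℝ => r ^ 3 - (-3 / 10 + 109 / 100 * x) * r ^ 2
      - 91 / 100 * x * r - 1) (Set.Icc rlo rhi) := by fun_prop
  obtain ⟨r, ⟨hr1, hr2⟩, hr⟩ := intermediate_value_Icc hle hc ⟨hlo, hhi⟩
  have hrp : 0 < r := by linarith
  obtain ⟨s, hs⟩ : ∃ s : ℝ, 2 * s = -3 / 10 + 109 / 100 * x - r := ⟨_, mul_div_cancel₀ _ two_ne_zero⟩
  have s1 : slo ≤ s := by linarith
  have s2 : s ≤ shi := by linarith
  have e1 : s ^ 2 ≤ slo ^ 2 := by nlinarith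
  have e2 : shi ^ 2 ≤ s ^ 2 := by nlinarith
  have q1 : tlo ^ 2 ≤ 1 / r - s ^ 2 := by
    have : slo ^ 2 + tlo ^ 2 ≤ 1 / r := by
      rw [le_div_iff₀ hrp]
      nlinarith [mul_le_mul_of_nonneg_right hr2 (by positivity : 0 ≤ slo ^ 2 + tlo ^ 2)]
    linarith
  have q2 : 1 / r - s ^ 2 ≤ thi ^ 2 := by
    have : 1 / r ≤ shi ^ 2 + thi ^ 2 := by
      rw [div_le_iff₀ hrp]
      nlinarith [mul_le_mul_of_nonneg_right hr1 (by positivity : 0 ≤ shi ^ 2 + thi ^ 2)]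
    linarith
  refine ⟨r, s, -√(1 / r - s ^ 2), hs, ?_, hr, s1, s2, ?_, ?_⟩
  · rw [neg_sq, Real.sq_sqrt (le_trans (sq_nonneg _) q1)]
    field_simp
    ring
  · exact neg_le_neg (Real.sqrt_le_iff.2 ⟨ht0, q2⟩)
  · exact neg_le_neg (Real.le_sqrt_of_sq_le q1)

/-- Rigorous eigenvalue enclosures for the Lomelí map with parameters
`a = 44/100, b = 21/100, c = 35/100, α = −1/4, τ = −3/10` (Section 4.3.2 of the paper).
There are two distinct diagonal fixed points `p₁ ≠ p₂`; `Df(p₁)` has a complex eigenvalue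
`λ₁` (together with its conjugate) with the stated real/imaginary part enclosures and
`|λ₁| > 1`, and `Df(p₂)` has a complex eigenvalue `λ₂` (together with its conjugate) with
the stated enclosures and `|λ₂| < 1`. -/
theorem lomeli_eigenvalue_enclosures
    (f : (Fin 3 → ℝ) → (Fin 3 → ℝ))
    (hf : ∀ v, f v =
      ![v 2 + (-1 / 4 : ℝ) + (-3 / 10 : ℝ) * v 0 + (44 / 100 : ℝ) * (v 0) ^ 2 +
          (21 / 100 : ℝ) * v 0 * v 1 + (35 / 100 : ℝ) * (v 1) ^ 2, v 0, v 1]) :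
    ∃ p1 p2 : Fin 3 → ℝ, p1 ≠ p2 ∧ f p1 = p1 ∧ f p2 = p2 ∧
      (∃ x : ℝ, p1 = ![x, x, x] ∧ x ^ 2 + (-3 / 10 : ℝ) * x + (-1 / 4 : ℝ) = 0) ∧
      (∃ x : ℝ, p2 = ![x, x, x] ∧ x ^ 2 + (-3 / 10 : ℝ) * x + (-1 / 4 : ℝ) = 0) ∧
      (∃ lam1 : ℂ,
        ((jacobian f p1).map Complex.ofReal).charpoly.IsRoot lam1 ∧
        ((jacobian f p1).map Complex.ofReal).charpoly.IsRoot (starRingEnd ℂ lam1) ∧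
        lam1.re ∈ Set.Icc (-0.71570025199987 : ℝ) (-0.71570025199985 : ℝ) ∧
        lam1.im ∈ Set.Icc (-0.93025058966104 : ℝ) (-0.93025058966103 : ℝ) ∧
        1 < ‖lam1‖) ∧
      (∃ lam2 : ℂ,
        ((jacobian f p2).map Complex.ofReal).charpoly.IsRoot lam2 ∧
        ((jacobian f p2).map Complex.ofReal).charpoly.IsRoot (starRingEnd ℂ lam2) ∧
        lam2.re ∈ Set.Icc (-0.47875667823481 : ℝ) (-0.47875667823480 : ℝ) ∧
        lam2.im ∈ Set.Icc (-0.70015090953401 : ℝ) (-0.70015090953400 : ℝ) ∧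
        ‖lam2‖ < 1) := by
  have h5 : √(0.2725 : ℝ) ^ 2 = 0.2725 := Real.sq_sqrt (by norm_num)
  have w1 : (0.522015325445527508987887701 : ℝ) ≤ √(0.2725 : ℝ) :=
    Real.le_sqrt_of_sq_le (by norm_num)
  have w2 : √(0.2725 : ℝ) ≤ (0.522015325445527508987887702 : ℝ) :=
    Real.sqrt_le_iff.2 ⟨by norm_num, by norm_num⟩
  set w := √(0.2725 : ℝ)
  have hx1 : (0.15 - w) ^ 2 + (-3 / 10 : ℝ) * (0.15 - w) + (-1 / 4 : ℝ) = 0 := by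
    linear_combination h5
  have hx2 : (0.15 + w) ^ 2 + (-3 / 10 : ℝ) * (0.15 + w) + (-1 / 4 : ℝ) = 0 := by
    linear_combination h5
  refine ⟨![0.15 - w, 0.15 - w, 0.15 - w], ![0.15 + w, 0.15 + w, 0.15 + w], ?_,
    lomeli_fix f hf _ hx1, lomeli_fix f hf _ hx2, ⟨_, rfl, hx1⟩, ⟨_, rfl, hx2⟩, ?_, ?_⟩
  · intro h
    have := congrFun h 0
    simp at this
    linarith
  · obtain ⟨r, s, t, hs, hst, hr, s1, s2, t1, t2⟩ := lomeli_enclose (0.15 - w)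
      0.72590379926409421640 0.72590379926409421641
      (-0.71570025199985960061) (-0.71570025199985960059)
      0.93025058966103 0.93025058966104
      (by norm_num) (by norm_num) (by linarith) (by linarith) (by linarith) (by linarith)
      (by norm_num) (by norm_num) (by norm_num) (by norm_num) (by norm_num)
    refine ⟨⟨s, t⟩, ?_, ?_, ⟨?_, ?_⟩, ⟨?_, ?_⟩, ?_⟩
    · rw [lomeli_fderiv f hf]
      exact lomeli_root _ _ r s t hs hst hr
    · rw [lomeli_fderiv f hf]
      exact lomeli_root _ _ r s (-t) hs (by rw [neg_sq]; exact hst) hr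
    · show _ ≤ s
      linarith
    · show s ≤ _
      linarith
    · show _ ≤ t
      linarith
    · show t ≤ _
      linarith
    · rw [← one_lt_sq_iff₀ (norm_nonneg _), Complex.sq_norm, Complex.normSq_mk]
      nlinarith
  · obtain ⟨r, s, t, hs, hst, hr, s1, s2, t1, t2⟩ := lomeli_enclose (0.15 + w)
      1.39001006120523259075 1.39001006120523259076
      (-0.47875667823480380299) (-0.47875667823480380297)
      0.70015090953400 0.70015090953401
      (by norm_num) (by norm_num) (by linarith) (by linarith) (by linarith) (by linarith)
      (by norm_num) (by norm_num) (by norm_num) (by norm_num) (by norm_num)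
    refine ⟨⟨s, t⟩, ?_, ?_, ⟨?_, ?_⟩, ⟨?_, ?_⟩, ?_⟩
    · rw [lomeli_fderiv f hf]
      exact lomeli_root _ _ r s t hs hst hr
    · rw [lomeli_fderiv f hf]
      exact lomeli_root _ _ r s (-t) hs (by rw [neg_sq]; exact hst) hr
    · show _ ≤ s
      linarith
    · show s ≤ _
      linarith
    · show _ ≤ t
      linarith
    · show t ≤ _
      linarith
    · rw [← sq_lt_one_iff₀ (norm_nonneg _), Complex.sq_norm, Complex.normSq_mk]
      nlinarith
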